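/- arXiv:1408.0409 — 4 statements merged into one kernel-verified Lean document; each statement's English description precedes it below -/
import Mathlib

section
/- There is an absolute constant C > 0 such that for every integer n ≥ 2, every graph G on n vertices and every integer Δ with 2 ≤ Δ ≤ n, there exists a set Z of vertices of G with |Z| ≤ C · (n/Δ) · log n such that every vertex of G of degree at least Δ has at least two of its neighbors belonging to Z. -/
/-!
A family of `m` subsets of an `n`-point set, each with at least `k` points, is hit by a random
sequence of more than `(n / k) log m` points: a given member is missed with probability at most
`(1 - k / n) ^ t`, so the union bound applies. Removing from each member the points already used to
hit it and repeating the argument gives several hits per member. The theorem is the case of the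
neighborhoods of the vertices of large degree, with two rounds.
-/

theorem mul_sub_pow_lt_pow_of_mul_log_lt {n k m : ℝ} {t : ℕ} (hk : 0 < k) (hkn : k ≤ n)
    (ht : n / k * Real.log m < t) : m * (n - k) ^ t < n ^ t := by
  have hn : 0 < n := hk.trans_le hkn
  have : 0 ≤ n - k := sub_nonneg.mpr hkn
  have hexp : n - k ≤ n * Real.exp (-(k / n)) := calc
    n - k = n * (1 - k / n) := by field_simp
    _ ≤ n * Real.exp (-(k / n)) := by gcongr; exact Real.one_sub_le_exp_neg _
  have hneg : Real.log m + t * -(k / n) < 0 := by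
    have hlog : Real.log m < t * (k / n) := calc
      Real.log m = n / k * Real.log m * (k / n) := by field_simp
      _ < t * (k / n) := by gcongr
    linarith
  calc
    m * (n - k) ^ t ≤ Real.exp (Real.log m) * (n * Real.exp (-(k / n))) ^ t := by
      gcongr
      exact Real.le_exp_log m
    _ = n ^ t * Real.exp (Real.log m + t * -(k / n)) := by
      rw [Real.exp_add, Real.exp_nat_mul]
      ring
    _ < n ^ t := mul_lt_of_lt_one_right (by positivity) (Real.exp_lt_one_iff.mpr hneg)

section HittingSet

open Finset

variable {ι V : Type*} [Fintype V] [DecidableEq V] {S : Finset ι} {A : ι → Finset V} {k : ℕ}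

theorem exists_card_le_forall_inter_nonempty_of_mul_pow_lt {t : ℕ} (hA : ∀ i ∈ S, k ≤ #(A i))
    (ht : #S * (Fintype.card V - k) ^ t < Fintype.card V ^ t) :
    ∃ Z : Finset V, #Z ≤ t ∧ ∀ i ∈ S, (A i ∩ Z).Nonempty := by
  have hmiss : #(S.biUnion fun i => Fintype.piFinset fun _ : Fin t => (A i)ᶜ)
      < #(univ : Finset (Fin t → V)) := calc
    _ ≤ #S * (Fintype.card V - k) ^ t := card_biUnion_le_card_mul _ _ _ fun i hi => by
      rw [Fintype.card_piFinset_const, card_compl]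
      gcongr
      exact hA i hi
    _ < Fintype.card V ^ t := ht
    _ = #(univ : Finset (Fin t → V)) := by simp
  obtain ⟨f, -, hf⟩ := exists_mem_notMem_of_card_lt_card hmiss
  refine ⟨univ.image f, card_image_le.trans_eq (card_fin t), fun i hi => ?_⟩
  obtain ⟨j, hj⟩ : ∃ j, f j ∈ A i := by
    by_contra! h
    exact hf (mem_biUnion.mpr ⟨i, hi, by simpa using h⟩)
  exact ⟨f j, mem_inter.mpr ⟨hj, mem_image_of_mem f (mem_univ j)⟩⟩

theorem exists_card_le_mul_log_forall_inter_nonempty (hk : 0 < k) (hA : ∀ i ∈ S, k ≤ #(A i)) :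
    ∃ Z : Finset V, (#Z : ℝ) ≤ Fintype.card V / k * Real.log #S + 1 ∧
      ∀ i ∈ S, (A i ∩ Z).Nonempty := by
  obtain rfl | ⟨i, hi⟩ := S.eq_empty_or_nonempty
  · exact ⟨∅, by simp⟩
  have hkV : k ≤ Fintype.card V := (hA i hi).trans (card_le_univ _)
  set L : ℝ := Fintype.card V / k * Real.log #S
  have ht : #S * (Fintype.card V - k) ^ (⌊L⌋₊ + 1) < Fintype.card V ^ (⌊L⌋₊ + 1) := by
    have h := mul_sub_pow_lt_pow_of_mul_log_lt (n := Fintype.card V) (k := k) (m := #S)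
      (t := ⌊L⌋₊ + 1) (by exact_mod_cast hk) (by exact_mod_cast hkV)
      (by exact_mod_cast Nat.lt_floor_add_one L)
    rw [← Nat.cast_sub hkV] at h
    exact_mod_cast h
  obtain ⟨Z, hZ, hhit⟩ := exists_card_le_forall_inter_nonempty_of_mul_pow_lt hA ht
  refine ⟨Z, ?_, hhit⟩
  calc
    (#Z : ℝ) ≤ ⌊L⌋₊ + 1 := by exact_mod_cast hZ
    _ ≤ L + 1 := by gcongr; exact Nat.floor_le (by positivity)

theorem exists_card_le_mul_log_forall_lt_card_inter (r : ℕ) (hk : 0 < k)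
    (hA : ∀ i ∈ S, k + r ≤ #(A i)) :
    ∃ Z : Finset V, (#Z : ℝ) ≤ (r + 1) * (Fintype.card V / k * Real.log #S + 1) ∧
      ∀ i ∈ S, r < #(A i ∩ Z) := by
  induction r with
  | zero => simpa [card_pos] using exists_card_le_mul_log_forall_inter_nonempty hk hA
  | succ r ih =>
    obtain ⟨Z, hZ, hhit⟩ := ih fun i hi => by have := hA i hi; lia
    choose! B hBsub hBcard using fun i hi => exists_subset_card_eq (Nat.succ_le_of_lt (hhit i hi))
    have hrest : ∀ i ∈ S, k ≤ #(A i \ B i) := fun i hi => by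
      rw [card_sdiff_of_subset ((hBsub i hi).trans inter_subset_left), hBcard i hi]
      exact Nat.le_sub_of_add_le (hA i hi)
    obtain ⟨Z', hZ', hhit'⟩ := exists_card_le_mul_log_forall_inter_nonempty hk hrest
    refine ⟨Z ∪ Z', ?_, fun i hi => ?_⟩
    · have hunion : (#(Z ∪ Z') : ℝ) ≤ #Z + #Z' := by exact_mod_cast card_union_le Z Z'
      push_cast
      linarith
    · obtain ⟨x, hx⟩ := hhit' i hi
      simp only [mem_inter, mem_sdiff] at hx
      have hsub : insert x (B i) ⊆ A i ∩ (Z ∪ Z') := insert_subset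
        (mem_inter.mpr ⟨hx.1.1, mem_union_right Z hx.2⟩)
        ((hBsub i hi).trans (inter_subset_inter_left subset_union_left))
      calc
        r + 1 < #(insert x (B i)) := by rw [card_insert_of_notMem hx.1.2, hBcard i hi]; lia
        _ ≤ #(A i ∩ (Z ∪ Z')) := card_le_card hsub

theorem exists_card_le_forall_lt_card_neighborFinset_inter (G : SimpleGraph V)
    [DecidableRel G.Adj] (r : ℕ) (hk : 0 < k) :
    ∃ Z : Finset V,
      (#Z : ℝ) ≤ (r + 1) * (Fintype.card V / k * Real.log (Fintype.card V) + 1) ∧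
      ∀ v, k + r ≤ G.degree v → r < #(G.neighborFinset v ∩ Z) := by
  set S : Finset V := {v | k + r ≤ G.degree v}
  obtain ⟨Z, hZ, hhit⟩ := exists_card_le_mul_log_forall_lt_card_inter (S := S)
    (A := fun v => G.neighborFinset v) r hk fun v hv => (mem_filter.mp hv).2
  refine ⟨Z, hZ.trans ?_, fun v hv => hhit v (mem_filter.mpr ⟨mem_univ v, hv⟩)⟩
  have hlog : Real.log #S ≤ Real.log (Fintype.card V) := by
    obtain hS | hS := (#S).eq_zero_or_pos
    · simp [hS, Real.log_natCast_nonneg]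
    · gcongr
      exact card_le_univ S
  gcongr

end HittingSet

theorem two_mul_div_sub_one_mul_log_add_one_le {n d : ℝ} (hd : 2 ≤ d) (hdn : d ≤ n) :
    2 * (n / (d - 1) * Real.log n + 1) ≤ 8 * (n / d) * Real.log n := by
  have hlog : 1 / 2 ≤ Real.log n := calc
    1 / 2 ≤ Real.log 2 := by linarith [Real.log_two_gt_d9]
    _ ≤ Real.log n := by gcongr; exact hd.trans hdn
  have hratio : 1 ≤ n / d := (one_le_div (by linarith)).mpr hdn
  have hpred : n / (d - 1) ≤ 2 * (n / d) := calc
    n / (d - 1) ≤ n / (d / 2) := by gcongr <;> linarith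
    _ = 2 * (n / d) := by field_simp
  have hone : 1 / 2 ≤ n / d * Real.log n := by nlinarith
  calc
    2 * (n / (d - 1) * Real.log n + 1) ≤ 2 * (2 * (n / d) * Real.log n + 1) := by gcongr
    _ ≤ 8 * (n / d) * Real.log n := by linarith

/-- **Existence of small FT-center sets (Obs. `obs:clust_prop`(4)).** There is an
absolute constant `C > 0` such that for every graph `G` on `n ≥ 2` vertices and
every threshold `2 ≤ Δ ≤ n` there is a set `Z` of at most `C · (n/Δ) · log n`
vertices such that every vertex of degree at least `Δ` has at least two neighbors
in `Z`. -/
theorem exists_ft_center_set :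
    ∃ C : ℝ, 0 < C ∧
      ∀ (n : ℕ), 2 ≤ n →
        ∀ (V : Type) [Fintype V], ∀ (G : SimpleGraph V), Fintype.card V = n →
          ∀ Δ : ℕ, 2 ≤ Δ → Δ ≤ n →
            ∃ Z : Set V,
              ((Z.ncard : ℝ) ≤ C * ((n : ℝ) / (Δ : ℝ)) * Real.log n) ∧
              ∀ v : V, Δ ≤ (G.neighborSet v).ncard →
                2 ≤ ((G.neighborSet v) ∩ Z).ncard := by
  classical
  refine ⟨8, by norm_num, ?_⟩
  rintro _ - V _ G rfl Δ hΔ hΔn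
  obtain ⟨Z, hZ, hhit⟩ := exists_card_le_forall_lt_card_neighborFinset_inter G (k := Δ - 1) 1
    (by lia)
  refine ⟨Z, ?_, fun v hv => ?_⟩
  · rw [Nat.cast_sub (by lia), Nat.cast_one, one_add_one_eq_two] at hZ
    rw [Set.ncard_coe_finset]
    exact hZ.trans (two_mul_div_sub_one_mul_log_add_one_le (by exact_mod_cast hΔ)
      (by exact_mod_cast hΔn))
  · rw [← G.coe_neighborFinset] at hv ⊢
    rw [Set.ncard_coe_finset, G.card_neighborFinset_eq_degree] at hv
    rw [← Finset.coe_inter, Set.ncard_coe_finset]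
    exact hhit v (by lia)
end

section
/- Let G be a graph on n vertices, let s and t be vertices of G, and let P be a shortest s–t path in G. Then for every integer Δ ≥ 1, the number of vertices on P whose degree in G is at least Δ is at most 3n/Δ. -/
/-!
The distance from `s` is injective on the vertices of a shortest walk from `s`, and it changes by
at most one along an edge. Hence the neighbors of any vertex `w` on such a walk lie at distance
`d - 1`, `d` or `d + 1` from `s`, where `d` is the distance of `w`, so there are at most three of
them. Counting the pairs (`u` on the walk, `w` adjacent to `u`) by their second component bounds
the sum of the degrees along the walk by `3n`, and each heavy vertex contributes at least `Δ`.
-/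

section ShortestWalk

open SimpleGraph Finset

variable {V : Type*} {G : SimpleGraph V} {s t : V}

theorem injOn_dist_support_of_length_eq_dist {p : G.Walk s t} (hp : p.length = G.dist s t) :
    Set.InjOn (G.dist s) {u | u ∈ p.support} := by
  classical
  have getVert_dist (u : V) (hu : u ∈ p.support) : p.getVert (G.dist s u) = u := by
    rw [← length_eq_dist_of_subwalk hp (p.isSubwalk_takeUntil hu), p.getVert_length_takeUntil hu]
  exact Set.LeftInvOn.injOn getVert_dist

theorem card_filter_adj_le_three_of_injOn_dist [DecidableRel G.Adj] {A : Finset V}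
    (hA : Set.InjOn (G.dist s) A) (w : V) : #{u ∈ A | G.Adj u w} ≤ 3 := by
  have mapsTo_dist : Set.MapsTo (G.dist s) ({u ∈ A | G.Adj u w} : Finset V)
      ({G.dist s w, G.dist s w + 1, G.dist s w - 1} : Finset ℕ) := by
    intro u hu
    simpa using (mem_filter.mp hu).2.symm.diff_dist_adj (u := s)
  have injOn_dist : Set.InjOn (G.dist s) ({u ∈ A | G.Adj u w} : Finset V) :=
    hA.mono (coe_subset.mpr (filter_subset _ _))
  exact (card_le_card_of_injOn _ mapsTo_dist injOn_dist).trans card_le_three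

theorem sum_degree_le_of_injOn_dist [Fintype V] [DecidableRel G.Adj] {A : Finset V}
    (hA : Set.InjOn (G.dist s) A) : ∑ u ∈ A, G.degree u ≤ 3 * Fintype.card V :=
  calc ∑ u ∈ A, G.degree u
    _ = ∑ u ∈ A, #(univ.bipartiteAbove G.Adj u) := by
      simp only [← card_neighborFinset_eq_degree, neighborFinset_eq_filter, bipartiteAbove]
    _ = ∑ w, #{u ∈ A | G.Adj u w} := sum_card_bipartiteAbove_eq_sum_card_bipartiteBelow _
    _ ≤ ∑ _w : V, 3 := sum_le_sum fun w _ ↦ card_filter_adj_le_three_of_injOn_dist hA w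
    _ = 3 * Fintype.card V := by rw [sum_const, card_univ, smul_eq_mul, mul_comm]

end ShortestWalk

/-- **Few heavy vertices on a shortest path (Obs. `obs:nmissing`).** If `P` is a
shortest `s–t` path in a graph `G` on `n` vertices, then for every `Δ ≥ 1` the
number of vertices on `P` of degree at least `Δ` is at most `3n/Δ`. -/
theorem heavy_vertices_on_shortest_path
    {V : Type*} [Fintype V] [DecidableEq V] (G : SimpleGraph V) (s t : V)
    (p : G.Walk s t) (hp : p.IsPath) (hlen : p.length = G.dist s t)
    (Δ : ℕ) (hΔ : 1 ≤ Δ) :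
    (({u ∈ p.support.toFinset | Δ ≤ (G.neighborSet u).ncard}).card : ℝ)
      ≤ 3 * (Fintype.card V : ℝ) / (Δ : ℝ) := by
  classical
  set heavy : Finset V := {u ∈ p.support.toFinset | Δ ≤ (G.neighborSet u).ncard}
  have degree_ge : ∀ u ∈ heavy, Δ ≤ G.degree u := by
    intro u hu
    rw [← G.card_neighborFinset_eq_degree, SimpleGraph.neighborFinset,
      ← Set.ncard_eq_toFinset_card']
    exact (Finset.mem_filter.mp hu).2
  have injOn_dist : Set.InjOn (G.dist s) heavy :=
    (injOn_dist_support_of_length_eq_dist hlen).mono fun u hu ↦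
      List.mem_toFinset.mp (Finset.mem_filter.mp hu).1
  have card_mul_le : heavy.card * Δ ≤ 3 * Fintype.card V :=
    (heavy.card_nsmul_le_sum _ Δ degree_ge).trans (sum_degree_le_of_injOn_dist injOn_dist)
  rw [le_div_iff₀ (by exact_mod_cast hΔ)]
  exact_mod_cast card_mul_le
end

section
/- Let G be a graph, let s and t be vertices of G, and let P be a shortest s–t path in G. Then every vertex of G has at most 3 neighbors among the vertices of P. -/
/-!
Replacing the part of a shortest walk between two of its vertices by a shortest walk between them
does not shorten it, so those vertices are no further apart along the walk than in the graph.
Two neighbors of `x` are at distance at most `2`, so the neighbors of `x` on a shortest walk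
sit at indices in a window of three consecutive integers.
-/

section ShortestWalk

variable {V : Type*} {G : SimpleGraph V} {s t : V}

theorem reachable_getVert_getVert (p : G.Walk s t) (i j : ℕ) :
    G.Reachable (p.getVert i) (p.getVert j) :=
  (p.take i).reachable.symm.trans (p.take j).reachable

theorem le_add_dist_getVert_of_length_eq_dist {p : G.Walk s t} (hp : p.length = G.dist s t)
    (i : ℕ) {j : ℕ} (hj : j ≤ p.length) :
    j ≤ i + G.dist (p.getVert i) (p.getVert j) := by
  obtain ⟨q, hq⟩ := (reachable_getVert_getVert p i j).exists_walk_length_eq_dist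
  have detour := G.dist_le ((p.take i).append (q.append (p.drop j)))
  simp only [SimpleGraph.Walk.length_append, SimpleGraph.Walk.take_length,
    SimpleGraph.Walk.drop_length] at detour
  omega

theorem card_le_add_one_of_forall_le_add {I : Finset ℕ} {d : ℕ}
    (hI : ∀ i ∈ I, ∀ j ∈ I, j ≤ i + d) : I.card ≤ d + 1 := by
  obtain rfl | hne := I.eq_empty_or_nonempty
  · exact Nat.zero_le _
  have window : I ⊆ Finset.Ico (I.min' hne) (I.min' hne + (d + 1)) := fun j hj ↦
    Finset.mem_Ico.mpr ⟨I.min'_le j hj, Nat.lt_succ_of_le (hI _ (I.min'_mem hne) j hj)⟩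
  simpa only [Nat.card_Ico, Nat.add_sub_cancel_left] using Finset.card_le_card window

theorem card_le_add_one_of_dist_le_of_length_eq_dist {p : G.Walk s t}
    (hp : p.length = G.dist s t) {S : Finset V} (hS : ∀ u ∈ S, u ∈ p.support) {d : ℕ}
    (hd : ∀ u ∈ S, ∀ v ∈ S, G.dist u v ≤ d) : S.card ≤ d + 1 := by
  classical
  have hS_image : (S : Set V) ⊆ p.getVert '' Set.Iic p.length := fun u hu ↦
    let ⟨i, hiu, hi⟩ := SimpleGraph.Walk.mem_support_iff_exists_getVert.mp (hS u hu)
    ⟨i, hi, hiu⟩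
  obtain ⟨I, hI, rfl⟩ := Finset.subset_set_image_iff.mp hS_image
  have indices_close : ∀ i ∈ I, ∀ j ∈ I, j ≤ i + d := fun i hi j hj ↦
    calc
      j ≤ i + G.dist (p.getVert i) (p.getVert j) :=
        le_add_dist_getVert_of_length_eq_dist hp i (hI hj)
      _ ≤ i + d := by
        gcongr
        exact hd _ (Finset.mem_image_of_mem _ hi) _ (Finset.mem_image_of_mem _ hj)
  exact Finset.card_image_le.trans (card_le_add_one_of_forall_le_add indices_close)

theorem dist_le_two_of_adj_of_adj {x u v : V} (hu : G.Adj x u) (hv : G.Adj x v) :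
    G.dist u v ≤ 2 :=
  G.dist_le (.cons hu.symm (.cons hv .nil))

end ShortestWalk

theorem neighbors_on_shortest_path_le_three_general
    {V : Type*} [DecidableEq V] (G : SimpleGraph V) [DecidableRel G.Adj] {s t : V}
    (p : G.Walk s t) (hp : p.length = G.dist s t) (x : V) :
    ({u ∈ p.support.toFinset | G.Adj x u}).card ≤ 3 := by
  apply card_le_add_one_of_dist_le_of_length_eq_dist hp (d := 2)
  · intro u hu
    exact List.mem_toFinset.mp (Finset.mem_filter.mp hu).1
  · intro u hu v hv
    exact dist_le_two_of_adj_of_adj (Finset.mem_filter.mp hu).2 (Finset.mem_filter.mp hv).2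

/-- **At most three neighbors on a shortest path.** If `P` is a shortest `s–t` path
in a graph `G`, then every vertex of `G` has at most `3` neighbors among the
vertices of `P`. -/
theorem neighbors_on_shortest_path_le_three
    {V : Type*} [Fintype V] [DecidableEq V] (G : SimpleGraph V)
    [DecidableRel G.Adj] (s t : V)
    (p : G.Walk s t) (hp : p.IsPath) (hlen : p.length = G.dist s t) :
    ∀ x : V, ({u ∈ p.support.toFinset | G.Adj x u}).card ≤ 3 :=
  neighbors_on_shortest_path_le_three_general G p hlen
end

section
/- Let T be a finite tree, let t be a vertex of T, and let S be a nonempty set of vertices of T such that every leaf of T belongs to S ∪ {t}. Let V⁺ consist of t, the vertices of S, and all vertices of degree at least 3 in T. Call two distinct vertices x, y ∈ V⁺ adjacent if the unique x–y path in T contains no vertex of V⁺ other than x and y. Then: (1) |V⁺| ≤ 2|S| + 1; (2) the number of adjacent pairs {x, y} of vertices of V⁺ is at most 2|S|; and (3) every edge of T lies on the unique path in T between some adjacent pair of V⁺. -/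
/-!
The handshake lemma on a tree reads `∑ v, (deg v - 2) = -2`. Leaves are the only negative terms and
each branch vertex contributes at least `1`, so there are at least two fewer branch vertices outside
a set `B` of terminals than there are terminals, as soon as `B` contains all leaves.

Vertices outside `V⁺` have degree exactly `2`, so a path leaving `x ∈ V⁺` has no choice until it
meets `V⁺` again. Hence the vertices adjacent to `x` in the sense of `V⁺` inject into the
neighbours of `x` in `T`, and comparing degree sums bounds the number of adjacent pairs. Conversely,
an edge can be prolonged at both ends until `V⁺` is met, since no leaf lies outside `V⁺`.
-/

section General

open SimpleGraph

variable {V : Type*} {G : SimpleGraph V}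

lemma ncard_neighborSet_eq_degree {v : V} [Fintype (G.neighborSet v)] :
    (G.neighborSet v).ncard = G.degree v :=
  Set.ncard_eq_toFinset_card' _

lemma setOf_exists_eq_mk_adj_eq_edgeSet (G : SimpleGraph V) :
    {e | ∃ x y, e = s(x, y) ∧ G.Adj x y} = G.edgeSet := by
  ext ⟨x, y⟩
  refine ⟨?_, fun h ↦ ⟨x, y, rfl, h⟩⟩
  rintro ⟨a, b, hab, h⟩
  rw [hab]
  exact h

lemma eq_or_eq_or_eq_of_degree_le_two {v a b c : V} [Fintype (G.neighborSet v)]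
    (hv : G.degree v ≤ 2) (ha : G.Adj v a) (hb : G.Adj v b) (hc : G.Adj v c) :
    a = b ∨ a = c ∨ b = c := by
  by_contra! hne
  have : 2 < (G.neighborFinset v).card :=
    Finset.two_lt_card_iff.mpr ⟨a, b, c, by simpa, by simpa, by simpa, hne⟩
  exact this.not_ge hv

end General

section FirstHit

open SimpleGraph

variable {V : Type*} {G : SimpleGraph V} {A : Set V}

/-- The walk `p` meets `A` in its last vertex and in no other vertex. The trivial walk at a vertex
of `A` qualifies, so that walks to the first hit can be built up edge by edge. -/
structure IsFirstHit (A : Set V) {x y : V} (p : G.Walk x y) : Prop where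
  end_mem : y ∈ A
  eq_end_of_mem : ∀ u ∈ p.support, u ∈ A → u = y

lemma isFirstHit_nil {x : V} (hx : x ∈ A) : IsFirstHit A (Walk.nil : G.Walk x x) :=
  ⟨hx, by simp⟩

lemma IsFirstHit.start_eq_end {x y : V} {p : G.Walk x y} (hp : IsFirstHit A p) (hx : x ∈ A) :
    x = y :=
  hp.eq_end_of_mem x p.start_mem_support hx

lemma isFirstHit_cons_iff {x v y : V} {h : G.Adj x v} {p : G.Walk v y} (hx : x ∉ A) :
    IsFirstHit A (p.cons h) ↔ IsFirstHit A p := by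
  refine ⟨fun hp ↦ ⟨hp.1, fun u hu ↦ hp.2 u (by simp [hu])⟩, fun hp ↦ ⟨hp.1, fun u hu huA ↦ ?_⟩⟩
  rw [Walk.support_cons, List.mem_cons] at hu
  exact hp.2 u (hu.resolve_left fun hux ↦ hx (hux ▸ huA)) huA

lemma IsFirstHit.end_unique [G.LocallyFinite] (hA : ∀ v ∉ A, G.degree v ≤ 2) {x v y z : V}
    {h : G.Adj x v} {p : G.Walk v y} {q : G.Walk v z} (hp : (p.cons h).IsPath)
    (hq : (q.cons h).IsPath) (hpA : IsFirstHit A p) (hqA : IsFirstHit A q) : y = z := by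
  induction p generalizing x with
  | nil => exact hqA.start_eq_end hpA.end_mem
  | @cons v w _ hvw p ih =>
    cases q with
    | nil => exact (hpA.start_eq_end hqA.end_mem).symm
    | @cons _ w' _ hvw' q =>
      by_cases hv : v ∈ A
      · exact (hpA.start_eq_end hv).symm.trans (hqA.start_eq_end hv)
      rw [Walk.cons_isPath_iff] at hp hq
      have hxw : x ≠ w := fun e ↦ hp.2 (by simp [e])
      have hxw' : x ≠ w' := fun e ↦ hq.2 (by simp [e])
      obtain rfl : w = w' :=
        ((eq_or_eq_or_eq_of_degree_le_two (hA v hv) h.symm hvw hvw').resolve_left hxw).resolve_left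
          hxw'
      exact ih hp.1 hq.1 ((isFirstHit_cons_iff hv).mp hpA) ((isFirstHit_cons_iff hv).mp hqA)

/-- Prolonging never gets stuck: in a forest, the only neighbour of the end of a path that lies on
the path is the penultimate vertex. -/
lemma exists_isPath_append_isFirstHit [Finite V] [G.LocallyFinite] (hG : G.IsAcyclic)
    (hA : ∀ v ∉ A, G.degree v ≠ 1) {x y : V} {p : G.Walk x y} (hp : p.IsPath) (hnil : ¬ p.Nil) :
    ∃ (z : V) (q : G.Walk y z), (p.append q).IsPath ∧ IsFirstHit A q := by
  have := Fintype.ofFinite V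
  induction hn : Fintype.card V - p.length using Nat.strong_induction_on generalizing y p with
  | _ n ih =>
    by_cases hy : y ∈ A
    · exact ⟨y, .nil, by simpa, isFirstHit_nil hy⟩
    obtain ⟨w, hyw, hw⟩ : ∃ w, G.Adj y w ∧ w ≠ p.penultimate := by
      by_contra! hall
      exact hA y hy (degree_eq_one_iff_existsUnique_adj.mpr
        ⟨p.penultimate, (p.adj_penultimate hnil).symm, hall⟩)
    have hwp : w ∉ p.support := fun hmem ↦ hw (hG.eq_penultimate_of_adj_end hp hyw hmem)
    have hdecr : Fintype.card V - (p.concat hyw).length < n := by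
      have hlt := hp.length_lt
      rw [Walk.length_concat]
      omega
    obtain ⟨z, q, hpq, hq⟩ := ih _ hdecr (hp.concat hwp hyw)
      (Walk.not_nil_iff_lt_length.mpr (by simp)) rfl
    exact ⟨z, q.cons hyw, by rwa [← Walk.concat_append], (isFirstHit_cons_iff hy).mpr hq⟩

end FirstHit

section PathSkeleton

open SimpleGraph

variable {V : Type*} {G : SimpleGraph V}

/-- The graph on `A` obtained from `G` by suppressing the vertices outside `A`: two distinct
vertices of `A` are joined if some path of `G` between them has no inner vertex in `A`. The vertex
type stays `V`, the vertices outside `A` becoming isolated. -/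
def pathSkeleton (G : SimpleGraph V) (A : Set V) : SimpleGraph V where
  Adj x y := x ∈ A ∧ y ∈ A ∧ x ≠ y ∧
    ∃ p : G.Walk x y, p.IsPath ∧ ∀ u ∈ p.support, u ∈ A → u = x ∨ u = y
  symm := ⟨fun _ _ ⟨hx, hy, hxy, p, hp, hpA⟩ ↦
    ⟨hy, hx, hxy.symm, p.reverse, hp.reverse, fun u hu huA ↦ (hpA u (by simpa using hu) huA).symm⟩⟩
  loopless := ⟨fun _ h ↦ h.2.2.1 rfl⟩

lemma pathSkeleton_adj {A : Set V} {x y : V} : (pathSkeleton G A).Adj x y ↔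
    x ∈ A ∧ y ∈ A ∧ x ≠ y ∧
      ∃ p : G.Walk x y, p.IsPath ∧ ∀ u ∈ p.support, u ∈ A → u = x ∨ u = y :=
  Iff.rfl

lemma pathSkeleton_adj_iff_of_isTree {A : Set V} (hG : G.IsTree) {x y : V} :
    (pathSkeleton G A).Adj x y ↔ x ∈ A ∧ y ∈ A ∧ x ≠ y ∧
      ∀ p : G.Walk x y, p.IsPath → ∀ u ∈ p.support, u ∈ A → u = x ∨ u = y := by
  obtain ⟨p, hp, huniq⟩ := hG.existsUnique_path x y
  have hpath (P : G.Walk x y → Prop) : (∃ q, q.IsPath ∧ P q) ↔ ∀ q, q.IsPath → P q :=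
    ⟨fun ⟨q, hq, hPq⟩ r hr ↦ by rwa [huniq r hr, ← huniq q hq], fun h ↦ ⟨p, hp, h p hp⟩⟩
  rw [pathSkeleton_adj, hpath]

lemma exists_isFirstHit_of_pathSkeleton_adj {A : Set V} {x y : V}
    (hxy : (pathSkeleton G A).Adj x y) :
    ∃ (v : V) (h : G.Adj x v) (p : G.Walk v y), (p.cons h).IsPath ∧ IsFirstHit A p := by
  obtain ⟨-, hy, hne, p, hp, hpA⟩ := hxy
  cases p with
  | nil => exact absurd rfl hne
  | @cons _ v _ h p =>
    have hx : x ∉ p.support := ((Walk.cons_isPath_iff h p).mp hp).2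
    refine ⟨v, h, p, hp, hy, fun u hu huA ↦ (hpA u (by simp [hu]) huA).resolve_left ?_⟩
    exact ne_of_mem_of_not_mem hu hx

lemma degree_pathSkeleton_le [G.LocallyFinite] {A : Set V} [(pathSkeleton G A).LocallyFinite]
    (hA : ∀ v ∉ A, G.degree v ≤ 2) (x : V) : (pathSkeleton G A).degree x ≤ G.degree x := by
  refine Finset.card_le_card_of_forall_subsingleton
    (fun y v ↦ ∃ (h : G.Adj x v) (p : G.Walk v y), (p.cons h).IsPath ∧ IsFirstHit A p)
    (fun y hy ↦ ?_) ?_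
  · obtain ⟨v, h, hp⟩ := exists_isFirstHit_of_pathSkeleton_adj ((mem_neighborFinset ..).mp hy)
    exact ⟨v, (mem_neighborFinset ..).mpr h, h, hp⟩
  · rintro v - y ⟨-, h, p, hp, hpA⟩ z ⟨-, _, q, hq, hqA⟩
    exact hpA.end_unique hA hp hq hqA

lemma degree_pathSkeleton_of_notMem {A : Set V} {x : V}
    [Fintype ((pathSkeleton G A).neighborSet x)] (hx : x ∉ A) : (pathSkeleton G A).degree x = 0 :=
  (degree_eq_zero _ _).mpr fun _ h ↦ hx h.1

lemma card_edgeFinset_pathSkeleton_add_card_compl_le [Fintype V] [DecidableEq V]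
    [DecidableRel G.Adj] {A : Finset V} [DecidableRel (pathSkeleton G A).Adj]
    (hA : ∀ v ∉ A, G.degree v = 2) :
    (pathSkeleton G A).edgeFinset.card + Aᶜ.card ≤ G.edgeFinset.card := by
  have hdeg (v : V) :
      (pathSkeleton G A).degree v + (if v ∈ Aᶜ then 2 else 0) ≤ G.degree v := by
    split_ifs with hv
    · rw [degree_pathSkeleton_of_notMem (by simpa using hv), hA v (by simpa using hv)]
    · exact degree_pathSkeleton_le (fun u hu ↦ (hA u hu).le) v
  have hsum := Finset.sum_le_sum fun v (_ : v ∈ Finset.univ) ↦ hdeg v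
  rw [Finset.sum_add_distrib, sum_degrees_eq_twice_card_edges, sum_degrees_eq_twice_card_edges,
    Finset.sum_ite_mem, Finset.univ_inter, Finset.sum_const, smul_eq_mul] at hsum
  omega

lemma card_edgeFinset_pathSkeleton_lt_card_of_isTree [Fintype V] [DecidableRel G.Adj]
    (hG : G.IsTree) {A : Finset V} [DecidableRel (pathSkeleton G A).Adj]
    (hA : ∀ v ∉ A, G.degree v = 2) : (pathSkeleton G A).edgeFinset.card < A.card := by
  classical
  have hle := card_edgeFinset_pathSkeleton_add_card_compl_le hA
  have hedges := hG.card_edgeFinset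
  have hcompl := A.card_add_card_compl
  omega

lemma exists_pathSkeleton_adj_isPath_mem_edges [Finite V] [G.LocallyFinite] {A : Set V}
    (hG : G.IsAcyclic) (hA : ∀ v ∉ A, G.degree v ≠ 1) {e : Sym2 V} (he : e ∈ G.edgeSet) :
    ∃ x y : V, (pathSkeleton G A).Adj x y ∧ ∃ p : G.Walk x y, p.IsPath ∧ e ∈ p.edges := by
  induction e with
  | h u v =>
    have huv : G.Adj u v := he
    obtain ⟨y, q, hq, hqA⟩ :=
      exists_isPath_append_isFirstHit hG hA (p := huv.toWalk) (by simp [huv.ne]) (by simp)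
    obtain ⟨x, r, hr, hrA⟩ :=
      exists_isPath_append_isFirstHit hG hA hq.reverse (by simp)
    set p := (huv.toWalk.append q).reverse.append r with hp
    have he : s(u, v) ∈ p.edges := by simp [hp]
    have hsupp (w : V) (hw : w ∈ p.support) : w ∈ q.support ∨ w ∈ r.support := by
      have hv := q.start_mem_support
      have hu := r.start_mem_support
      simp only [hp, Walk.mem_support_append_iff, Walk.support_reverse, List.mem_reverse,
        Walk.support_cons, Walk.support_nil, List.mem_cons, List.not_mem_nil, or_false] at hw
      rcases hw with ((rfl | rfl) | hw) | hw <;> tauto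
    have hyx : y ≠ x := hr.nil_iff_eq.not.mp (by simp [hp, Walk.nil_append_iff])
    refine ⟨y, x, ⟨hqA.end_mem, hrA.end_mem, hyx, p, hr, fun w hw hwA ↦ ?_⟩, p, hr, he⟩
    exact (hsupp w hw).imp (hqA.eq_end_of_mem w · hwA) (hrA.eq_end_of_mem w · hwA)

end PathSkeleton

section KeyVertices

open SimpleGraph Finset

variable {V : Type*} [Fintype V] [DecidableEq V] {G : SimpleGraph V} [DecidableRel G.Adj]
  {B : Finset V}

/-- The terminals in `B` together with the branch vertices of `G`; this is the set `V⁺` of the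
theorem for `B = S ∪ {t}`. -/
def keyVertices (G : SimpleGraph V) [DecidableRel G.Adj] (B : Finset V) : Finset V :=
  B ∪ univ.filter fun v ↦ 3 ≤ G.degree v

lemma mem_keyVertices {v : V} : v ∈ keyVertices G B ↔ v ∈ B ∨ 3 ≤ G.degree v := by
  simp [keyVertices]

lemma card_keyVertices_add_two_mul_card_le (hpos : ∀ v, 0 < G.degree v)
    (hB : ∀ v, G.degree v = 1 → v ∈ B) :
    (keyVertices G B).card + 2 * Fintype.card V ≤ 2 * G.edgeFinset.card + 2 * B.card := by
  have hdeg (v : V) :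
      (if v ∈ keyVertices G B then 1 else 0) + 2 ≤ G.degree v + (if v ∈ B then 2 else 0) := by
    have hv := hpos v
    have hleaf : v ∉ B → G.degree v ≠ 1 := mt (hB v)
    simp only [mem_keyVertices]
    split_ifs <;> grind
  have hsum := sum_le_sum fun v (_ : v ∈ univ) ↦ hdeg v
  simp only [sum_add_distrib, sum_degrees_eq_twice_card_edges, sum_ite_mem, univ_inter, sum_const,
    smul_eq_mul, mul_one, card_univ] at hsum
  omega

lemma card_keyVertices_lt_two_mul_card_of_isTree (hG : G.IsTree) (hne : B.Nonempty)
    (hB : ∀ v, G.degree v = 1 → v ∈ B) : (keyVertices G B).card < 2 * B.card := by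
  rcases subsingleton_or_nontrivial V with _ | _
  · have hle := card_le_one_of_subsingleton (keyVertices G B)
    have hpos := hne.card_pos
    omega
  · have hle := card_keyVertices_add_two_mul_card_le
      (fun v ↦ hG.connected.preconnected.degree_pos_of_nontrivial v) hB
    have hedges := hG.card_edgeFinset
    omega

lemma degree_eq_two_of_notMem_keyVertices (hG : G.Preconnected) (hne : B.Nonempty)
    (hB : ∀ v, G.degree v = 1 → v ∈ B) {v : V} (hv : v ∉ keyVertices G B) : G.degree v = 2 := by
  rw [mem_keyVertices, not_or] at hv
  obtain ⟨b, hb⟩ := hne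
  have : Nontrivial V := ⟨b, v, ne_of_mem_of_not_mem hb hv.1⟩
  have hpos := hG.degree_pos_of_nontrivial v
  have hleaf : G.degree v ≠ 1 := mt (hB v) hv.1
  omega

end KeyVertices

/-- **Branching structure of the tree of source paths (Obs. `obs:xyt`).**
Let `T` be a finite tree, `t` a vertex, and `S` a nonempty set of vertices such
that every leaf of `T` belongs to `S ∪ {t}`.  Let `V⁺` consist of `t`, the vertices
of `S` and all vertices of degree at least `3`; call `x ≠ y` in `V⁺` *adjacent* if
the unique `x–y` path in `T` meets `V⁺` only in `x` and `y`.  Then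
(1) `|V⁺| ≤ 2|S| + 1`, (2) there are at most `2|S|` adjacent (unordered) pairs, and
(3) every edge of `T` lies on the unique path between some adjacent pair. -/
theorem tree_branching_structure
    {V : Type*} [Fintype V] [DecidableEq V] (T : SimpleGraph V) (hT : T.IsTree)
    (t : V) (S : Finset V) (hS : S.Nonempty)
    (hleaf : ∀ u : V, (T.neighborSet u).ncard = 1 → u ∈ S ∨ u = t)
    (Vplus : Set V)
    (hVplus : Vplus = {t} ∪ ↑S ∪ {u : V | 3 ≤ (T.neighborSet u).ncard})
    (AdjPair : V → V → Prop)
    (hAdjPair : ∀ x y : V, AdjPair x y ↔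
      (x ∈ Vplus ∧ y ∈ Vplus ∧ x ≠ y ∧
        ∀ (p : T.Walk x y), p.IsPath →
          ∀ u ∈ p.support, u ∈ Vplus → u = x ∨ u = y)) :
    Vplus.ncard ≤ 2 * S.card + 1 ∧
    {e : Sym2 V | ∃ x y : V, e = s(x, y) ∧ AdjPair x y}.ncard ≤ 2 * S.card ∧
    ∀ e ∈ T.edgeSet, ∃ x y : V, AdjPair x y ∧
      ∃ (p : T.Walk x y), p.IsPath ∧ e ∈ p.edges := by
  classical
  simp only [ncard_neighborSet_eq_degree] at hleaf hVplus
  set B := insert t S with hBdef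
  have hne : B.Nonempty := Finset.insert_nonempty t S
  have hB (u : V) (hu : T.degree u = 1) : u ∈ B := Finset.mem_insert.mpr (hleaf u hu).symm
  obtain rfl : Vplus = keyVertices T B := by simp [hVplus, keyVertices, hBdef, Set.insert_union]
  have hdeg (v : V) (hv : v ∉ keyVertices T B) : T.degree v = 2 :=
    degree_eq_two_of_notMem_keyVertices hT.connected.preconnected hne hB hv
  obtain rfl : AdjPair = (pathSkeleton T (keyVertices T B)).Adj := by
    ext x y
    rw [hAdjPair, pathSkeleton_adj_iff_of_isTree hT]
  rw [setOf_exists_eq_mk_adj_eq_edgeSet, ← SimpleGraph.coe_edgeFinset, Set.ncard_coe_finset,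
    Set.ncard_coe_finset]
  have hvertices := card_keyVertices_lt_two_mul_card_of_isTree hT hne hB
  have hpairs := card_edgeFinset_pathSkeleton_lt_card_of_isTree hT hdeg
  have hBcard : B.card ≤ S.card + 1 := Finset.card_insert_le t S
  refine ⟨by omega, by omega, fun e he ↦ ?_⟩
  exact exists_pathSkeleton_adj_isPath_mem_edges hT.isAcyclic (fun v hv ↦ by simp [hdeg v hv]) he
end
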